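/- arXiv:1304.2254 — 8 statements merged into one kernel-verified Lean document; each statement's English description precedes it below -/
import Mathlib

section
/- Let q = 4 and let k ≥ 1 be an integer. Then the map g : F_{q^{3k}} → F_{q^{3k}} defined by g(x) = x + S_{2k}(x)^{q^{2k}} + S_{2k}(x)^{q^k + 3} is a bijection of F_{q^{3k}} (i.e., x + S_{2k}^{q^{2k}} + S_{2k}^{q^k+3} is a permutation polynomial of F_{4^{3k}}). -/
/-- `S2k q k x = x + x^q + x^(q^2) + ⋯ + x^(q^(2k-1))`. -/
def S2k (q k : ℕ) {F : Type*} [Field F] (x : F) : F :=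
  ∑ i ∈ Finset.range (2 * k), x ^ q ^ i

/-!
Write `g` for the map, `Q = 4 ^ k` and `s = S2k 4 k x`. In characteristic two, if `x ^ Q ^ 3 = x`,
then `s ^ 4 + s = x ^ Q ^ 2 + x` and `s + s ^ Q + s ^ Q ^ 2 = 0`. Hence adding the `Q ^ 2`-th power
of `g x` to `g x` eliminates `x`, leaving `s * (s ^ Q) ^ 2 * s ^ Q ^ 2`. The product of the three
conjugates of this expression is the fourth power of the norm `N s = s * s ^ Q * s ^ Q ^ 2`, while
one of the conjugates is `s * N s`. So `g x` determines `N s`, then `s`, and finally `x`.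
-/

section CubicAutomorphism

variable {R : Type*} [CommRing R] [CharP R 2] {σ : R →+* R}

theorem mul_sq_mul_injective_of_iterate_three_eq [NoZeroDivisors R] (hσ : ∀ x, σ (σ (σ x)) = x) :
    Function.Injective fun a => a * σ a ^ 2 * σ (σ a) := by
  set f : R → R := fun a => a * σ a ^ 2 * σ (σ a) with hf
  set N : R → R := fun a => a * σ a * σ (σ a) with hN
  have norm_pow_four (a : R) : N a ^ 2 ^ 2 = f a * σ (f a) * σ (σ (f a)) := by
    simp only [hf, hN, map_mul, map_pow, hσ]
    ring
  have mul_norm (a : R) : a * N a = σ (σ (f a)) := by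
    simp only [hf, hN, map_mul, map_pow, hσ]
    ring
  have eq_zero_of_norm_eq_zero {a : R} (ha : N a = 0) : a = 0 := by
    have σ_injective : Function.Injective σ :=
      Function.LeftInverse.injective (g := fun x => σ (σ x)) hσ
    simpa only [hN, mul_eq_zero, map_eq_zero_iff σ σ_injective, or_self] using ha
  intro a b hab
  have norm_eq : N a = N b := by
    apply iterateFrobenius_inj R 2 2
    simp only [iterateFrobenius_def, norm_pow_four, hab]
  by_cases hNb : N b = 0
  · rw [eq_zero_of_norm_eq_zero hNb, eq_zero_of_norm_eq_zero (norm_eq.trans hNb)]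
  · apply mul_right_cancel₀ hNb
    calc a * N b = a * N a := by rw [norm_eq]
      _ = b * N b := by rw [mul_norm, mul_norm, hab]

theorem map_map_add_self_eq_mul_sq_mul (hσ : ∀ x, σ (σ (σ x)) = x) {x s : R}
    (hs : s ^ 4 + s = σ (σ x) + x) (htrace : s + σ s + σ (σ s) = 0) :
    σ (σ (x + σ (σ s) + σ s * s ^ 3)) + (x + σ (σ s) + σ s * s ^ 3) =
      s * σ s ^ 2 * σ (σ s) := by
  have two_eq_zero : (2 : R) = 0 := CharTwo.two_eq_zero
  have hσσs : σ (σ s) = s + σ s := by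
    rw [← CharTwo.add_eq_zero, add_comm, htrace]
  simp only [map_add, map_mul, map_pow, hσ]
  rw [hσσs]
  linear_combination -hs + (s ^ 4 + 2 * s ^ 3 * σ s + s ^ 2 * σ s ^ 2 + s + σ s) * two_eq_zero

theorem add_map_map_add_map_mul_cube_injective [NoZeroDivisors R]
    (hσ : ∀ x, σ (σ (σ x)) = x) {S : R → R} (hS : ∀ x, S x ^ 4 + S x = σ (σ x) + x)
    (htrace : ∀ x, S x + σ (S x) + σ (σ (S x)) = 0) :
    Function.Injective fun x => x + σ (σ (S x)) + σ (S x) * S x ^ 3 := by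
  intro x y hxy
  dsimp only at hxy
  have S_eq : S x = S y := by
    apply mul_sq_mul_injective_of_iterate_three_eq hσ
    dsimp only
    rw [← map_map_add_self_eq_mul_sq_mul hσ (hS x) (htrace x), hxy,
      map_map_add_self_eq_mul_sq_mul hσ (hS y) (htrace y)]
  rw [S_eq] at hxy
  exact add_right_cancel (add_right_cancel hxy)

end CubicAutomorphism

/-- The partial trace `x + x ^ q + ⋯ + x ^ q ^ (m - 1)`, with an arbitrary number `m` of terms, so
that `S2k q k = partialTrace q (2 * k)` can be compared with the sums of `k` and `3 * k` terms. -/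
def partialTrace {R : Type*} [CommSemiring R] (q m : ℕ) (x : R) : R :=
  ∑ i ∈ Finset.range m, x ^ q ^ i

section PartialTrace

variable {R : Type*} [CommRing R] (p : ℕ) [ExpChar R p] (n : ℕ)

theorem partialTrace_pow (l m : ℕ) (x : R) :
    partialTrace (p ^ n) m x ^ (p ^ n) ^ l = partialTrace (p ^ n) m (x ^ (p ^ n) ^ l) := by
  simp only [partialTrace, ← pow_mul p n l, sum_pow_char_pow, pow_right_comm x _ (p ^ (n * l))]

theorem partialTrace_add (l m : ℕ) (x : R) :
    partialTrace (p ^ n) (l + m) x =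
      partialTrace (p ^ n) l x + partialTrace (p ^ n) m x ^ (p ^ n) ^ l := by
  rw [partialTrace_pow]
  simp only [partialTrace, Finset.sum_range_add, pow_add, pow_mul]

theorem partialTrace_pow_sub_self (m : ℕ) (x : R) :
    partialTrace (p ^ n) m x ^ p ^ n - partialTrace (p ^ n) m x = x ^ (p ^ n) ^ m - x := by
  have one_term (y : R) : partialTrace (p ^ n) 1 y = y := by simp [partialTrace]
  have split_first := partialTrace_add p n 1 m x
  have split_last := partialTrace_add p n m 1 x
  rw [one_term, pow_one] at split_first
  rw [one_term, add_comm m 1] at split_last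
  linear_combination split_last - split_first

theorem partialTrace_two_mul_add_conjugates (k : ℕ) {x : R} (hx : x ^ (p ^ n) ^ (3 * k) = x) :
    partialTrace (p ^ n) (2 * k) x + partialTrace (p ^ n) (2 * k) x ^ (p ^ n) ^ k +
        partialTrace (p ^ n) (2 * k) x ^ (p ^ n) ^ (2 * k) =
      2 * partialTrace (p ^ n) (3 * k) x := by
  have split_three := partialTrace_add p n k (2 * k) x
  have split_four := partialTrace_add p n (2 * k) (2 * k) x
  have split_four' := partialTrace_add p n (3 * k) k x
  rw [partialTrace_pow, hx] at split_four'
  rw [show k + 2 * k = 3 * k by ring] at split_three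
  rw [show 2 * k + 2 * k = 3 * k + k by ring] at split_four
  linear_combination split_four' - split_four - split_three

end PartialTrace

theorem pow_four_pow_three_mul_eq_self {F : Type*} [Field F] [Fintype F] {k d : ℕ}
    (hd : d ∣ 6 * k) (hF : Fintype.card F = 2 ^ d) (x : F) : x ^ 4 ^ (3 * k) = x := by
  obtain ⟨m, hm⟩ := hd
  have exponent_eq : 4 ^ (3 * k) = Fintype.card F ^ m := by
    rw [hF, ← pow_mul, ← hm, show 4 = 2 ^ 2 from rfl, ← pow_mul]
    congr 1
    ring
  rw [exponent_eq, FiniteField.pow_card_pow]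

theorem stmt_0_general (k d : ℕ) (hd : d ∣ 6 * k)
    (F : Type*) [Field F] [Fintype F] (hF : Fintype.card F = 2 ^ d) :
    Function.Bijective (fun x : F =>
      x + (S2k 4 k x) ^ 4 ^ (2 * k) + (S2k 4 k x) ^ (4 ^ k + 3)) := by
  have : CharP F 2 := charP_of_card_eq_prime_pow hF
  have pow_eq_self (x : F) : x ^ 4 ^ (3 * k) = x := pow_four_pow_three_mul_eq_self hd hF x
  set σ : F →+* F := iterateFrobenius F 2 (2 * k)
  have σ_apply (x : F) : σ x = x ^ 4 ^ k := by
    rw [iterateFrobenius_def, pow_mul, show 2 ^ 2 = 4 from rfl]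
  have σ_σ_apply (x : F) : σ (σ x) = x ^ 4 ^ (2 * k) := by
    rw [σ_apply, σ_apply, ← pow_mul, ← pow_add, two_mul]
  have σ_σ_σ_apply (x : F) : σ (σ (σ x)) = x := by
    rw [σ_σ_apply, σ_apply, ← pow_mul, ← pow_add, show k + 2 * k = 3 * k by ring, pow_eq_self]
  have S_pow_four (x : F) : S2k 4 k x ^ 4 + S2k 4 k x = σ (σ x) + x := by
    rw [σ_σ_apply, ← CharTwo.sub_eq_add, ← CharTwo.sub_eq_add]
    exact partialTrace_pow_sub_self 2 2 (2 * k) x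
  have S_trace (x : F) : S2k 4 k x + σ (S2k 4 k x) + σ (σ (S2k 4 k x)) = 0 := by
    rw [σ_σ_apply, σ_apply]
    exact (partialTrace_two_mul_add_conjugates 2 2 k (pow_eq_self x)).trans
      (by rw [CharTwo.two_eq_zero, zero_mul])
  apply Finite.injective_iff_bijective.1
  simp only [pow_add _ (4 ^ k) 3, ← σ_σ_apply, ← σ_apply]
  exact add_map_map_add_map_mul_cube_injective σ_σ_σ_apply S_pow_four S_trace

/-- For `q = 4` and `k ≥ 1`, the map
`x ↦ x + S_{2k}(x)^{q^{2k}} + S_{2k}(x)^{q^k+3}` is a bijection of `F_{q^{3k}}`. -/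
theorem stmt_0 (k : ℕ) (hk : 0 < k)
    (F : Type*) [Field F] [Fintype F] (hF : Fintype.card F = 4 ^ (3 * k)) :
    Function.Bijective (fun x : F =>
      x + (S2k 4 k x) ^ 4 ^ (2 * k) + (S2k 4 k x) ^ (4 ^ k + 3)) :=
  stmt_0_general k (2 * (3 * k)) ⟨1, by ring⟩ F (hF.trans (pow_mul 2 2 (3 * k)).symm)
end

section
/- Let q be a power of 2 and k ≥ 1 an integer. Let L : F_{q^{3k}} → F_{q^{3k}} be an additive (F_2-linear) map such that (i) L maps the subfield F_{q^k} bijectively onto itself, and (ii) L(x) + L(x)^{q^{2k}} = S_{2k}(x)^4 for all x ∈ F_{q^{3k}}. Then the map x ↦ L(x) + S_{2k}(x)^{q^k + 3} is a bijection of F_{q^{3k}}. -/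
/-!
Let `φ x = x ^ q ^ k`, an automorphism with `φ³ = 1`, and let `f x = L x + φ (S x) * S x ^ 3`, where
`S = S_{2k}`. Every value `s = S x` satisfies `s + φ s + φ² s = 0`, and then (ii) collapses to
`f x + φ² (f x) = φ s * N s` with `N s = s * φ s * φ² s`. Applying `N` gives
`N (φ s * N s) = N s ^ 4`, so in characteristic `2` the value `f x` determines `N s`, hence `s`,
hence also `L x`. Finally `S` and `L` have no common kernel: the kernel of `S` lies in the fixed
field of `φ`, where `L` is injective.
-/

open Finset Function

section OrbitProd

/-- The product `a * φ a * ⋯ * φ^[n - 1] a`, equal to `1` for `n = 0`. When `φ` is an automorphism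
with `φ^[n] = id`, it plays the role of the norm to the fixed points of `φ`. -/
def orbitProd {M : Type*} [CommMonoid M] (φ : M → M) (n : ℕ) (a : M) : M :=
  ∏ i ∈ range n, φ^[i] a

variable {M : Type*} [CommMonoid M]

theorem orbitProd_three (φ : M → M) (a : M) : orbitProd φ 3 a = a * φ a * φ (φ a) := by
  simp [orbitProd, prod_range_succ]

theorem orbitProd_apply_of_iterate_eq {φ : M → M} {n : ℕ} {a : M} (ha : φ^[n] a = a) :
    orbitProd φ n (φ a) = orbitProd φ n a := by
  cases n with
  | zero => rfl
  | succ n =>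
    rw [orbitProd, prod_range_succ, ← iterate_succ_apply, ha, orbitProd, prod_range_succ']
    simp only [iterate_succ_apply, iterate_zero_apply]

theorem orbitProd_of_isFixedPt {φ : M → M} {c : M} (hc : IsFixedPt φ c) (n : ℕ) :
    orbitProd φ n c = c ^ n := by
  simp [orbitProd, (hc.iterate _).eq]

theorem orbitProd_mul (φ : M →* M) (n : ℕ) (a b : M) :
    orbitProd φ n (a * b) = orbitProd φ n a * orbitProd φ n b := by
  simp only [orbitProd, iterate_map_mul, prod_mul_distrib]

theorem map_orbitProd (φ : M →* M) (n : ℕ) (a : M) :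
    φ (orbitProd φ n a) = orbitProd φ n (φ a) := by
  simp only [orbitProd, map_prod, ← iterate_succ_apply, iterate_succ_apply']

theorem orbitProd_mul_orbitProd {φ : M →* M} {n : ℕ} {a : M} (ha : φ^[n] a = a) :
    orbitProd φ n (a * orbitProd φ n a) = orbitProd φ n a ^ (n + 1) := by
  have hfixed : IsFixedPt φ (orbitProd φ n a) :=
    (map_orbitProd φ n a).trans (orbitProd_apply_of_iterate_eq ha)
  rw [orbitProd_mul, orbitProd_of_isFixedPt hfixed, pow_succ']

theorem eq_zero_of_orbitProd_eq_zero {K : Type*} [Field K] {φ : K →+* K} {n : ℕ} {a : K}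
    (h : orbitProd φ n a = 0) : a = 0 := by
  obtain ⟨i, -, hi⟩ := prod_eq_zero_iff.1 h
  exact φ.injective.iterate i (hi.trans (iterate_map_zero φ i).symm)

theorem injective_mul_orbitProd {K : Type*} [Field K] {φ : K →+* K} {n : ℕ} (hφ : φ^[n] = id)
    (hpow : Injective fun a : K => a ^ (n + 1)) : Injective fun a => a * orbitProd φ n a := by
  intro a b (hab : a * orbitProd φ n a = b * orbitProd φ n b)
  have horbit (c : K) : orbitProd φ n (c * orbitProd φ n c) = orbitProd φ n c ^ (n + 1) :=
    orbitProd_mul_orbitProd (φ := (φ : K →* K)) (congrFun hφ c)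
  have hprod : orbitProd φ n a = orbitProd φ n b :=
    hpow (by simp only [← horbit, hab])
  by_cases ha : orbitProd φ n a = 0
  · have hb : orbitProd φ n b = 0 := hprod ▸ ha
    rw [eq_zero_of_orbitProd_eq_zero ha, eq_zero_of_orbitProd_eq_zero hb]
  · rw [← hprod] at hab
    exact mul_right_cancel₀ ha hab

end OrbitProd

section CharTwo

theorem pow_four_injective_of_charTwo {R : Type*} [CommRing R] [IsReduced R] [CharP R 2] :
    Injective fun a : R => a ^ 4 :=
  iterateFrobenius_inj R 2 2

variable {F : Type*} [Field F] [CharP F 2] {φ : F →+* F}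

theorem add_map_map_eq_map_mul_orbitProd {s l : F} (hφs : φ (φ (φ s)) = s)
    (hs : s + φ s + φ (φ s) = 0) (hl : l + φ (φ l) = s ^ 4) :
    l + φ s * s ^ 3 + φ (φ (l + φ s * s ^ 3)) = φ s * orbitProd φ 3 s := by
  have hφφs : φ (φ s) = s + φ s := (CharTwo.add_eq_zero.1 hs).symm
  have hφφ : φ (φ (l + φ s * s ^ 3)) = φ (φ l) + s * (s + φ s) ^ 3 := by
    simp only [map_add, map_mul, map_pow, hφs, ← hφφs]
  rw [hφφ, orbitProd_three, hφφs]
  linear_combination hl +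
    (s ^ 4 + 2 * s ^ 3 * φ s + s ^ 2 * φ s ^ 2) * CharTwo.two_eq_zero (R := F)

theorem injective_add_map_mul_pow_three {G : Type*} [AddGroup G] {L S : G →+ F}
    (hφ : φ^[3] = id) (hS : ∀ x, S x + φ (S x) + φ (φ (S x)) = 0)
    (hL : ∀ x, L x + φ (φ (L x)) = S x ^ 4) (hker : ∀ x, S x = 0 → L x = 0 → x = 0) :
    Injective fun x => L x + φ (S x) * S x ^ 3 := by
  intro x y (hxy : L x + φ (S x) * S x ^ 3 = L y + φ (S y) * S y ^ 3)
  have hcollapse (z : G) : L z + φ (S z) * S z ^ 3 + φ (φ (L z + φ (S z) * S z ^ 3)) =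
      φ (S z) * orbitProd φ 3 (φ (S z)) := by
    rw [orbitProd_apply_of_iterate_eq (congrFun hφ (S z)),
      add_map_map_eq_map_mul_orbitProd (congrFun hφ (S z)) (hS z) (hL z)]
  have hSxy : S x = S y := by
    refine φ.injective (injective_mul_orbitProd hφ pow_four_injective_of_charTwo ?_)
    simp only [← hcollapse, hxy]
  have hLxy : L x = L y := by
    rw [hSxy] at hxy
    exact add_right_cancel hxy
  refine sub_eq_zero.1 (hker (x - y) ?_ ?_)
  · rw [map_sub, hSxy, sub_self]
  · rw [map_sub, hLxy, sub_self]

end CharTwo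

namespace S2k

variable {F : Type*} [Field F] {q k : ℕ} {x : F}

theorem eq_birkhoffSum (q k : ℕ) (x : F) : S2k q k x = birkhoffSum (· ^ q) id (2 * k) x := by
  simp only [S2k, birkhoffSum, pow_iterate, id]

theorem apply_pow_sub_apply (q k : ℕ) (x : F) :
    S2k q k (x ^ q) - S2k q k x = x ^ q ^ (2 * k) - x := by
  simpa only [eq_birkhoffSum, pow_iterate, id] using
    birkhoffSum_apply_sub_birkhoffSum (· ^ q) (id : F → F) (2 * k) x

theorem add_add_eq_two_mul_birkhoffSum (hx : x ^ q ^ (3 * k) = x) :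
    S2k q k x + S2k q k (x ^ q ^ k) + S2k q k (x ^ q ^ (2 * k)) =
      2 * birkhoffSum (· ^ q) id (3 * k) x := by
  have hiter (m n : ℕ) : (x ^ q ^ m) ^ q ^ n = x ^ q ^ (m + n) := by rw [← pow_mul, ← pow_add]
  have hsplit (y : F) : S2k q k y =
      birkhoffSum (· ^ q) id k y + birkhoffSum (· ^ q) id k (y ^ q ^ k) := by
    rw [eq_birkhoffSum, two_mul, birkhoffSum_add, pow_iterate]
  rw [show 3 * k = k + k + k by ring] at hx ⊢
  simp only [hsplit, birkhoffSum_add, pow_iterate, hiter, two_mul k, hx]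
  ring

variable {p e : ℕ} [ExpChar F p]

theorem apply_add (x y : F) : S2k (p ^ e) k (x + y) = S2k (p ^ e) k x + S2k (p ^ e) k y := by
  simp only [S2k, ← pow_mul, add_pow_expChar_pow, sum_add_distrib]

theorem apply_expChar_pow (q k n : ℕ) (x : F) :
    S2k q k (x ^ p ^ n) = S2k q k x ^ p ^ n := by
  simp only [S2k, sum_pow_char_pow, pow_right_comm]

theorem pow_eq_self_of_eq_zero (hx : x ^ (p ^ e) ^ (3 * k) = x) (hS : S2k (p ^ e) k x = 0) :
    x ^ (p ^ e) ^ k = x := by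
  have hp : p ^ e ≠ 0 := pow_ne_zero e (expChar_pos F p).ne'
  have hfixed : x ^ (p ^ e) ^ (2 * k) = x := by
    have h := apply_pow_sub_apply (p ^ e) k x
    rwa [apply_expChar_pow, hS, zero_pow hp, sub_zero, eq_comm, sub_eq_zero] at h
  calc x ^ (p ^ e) ^ k = (x ^ (p ^ e) ^ (2 * k)) ^ (p ^ e) ^ k := by rw [hfixed]
    _ = x ^ (p ^ e) ^ (3 * k) := by rw [← pow_mul, ← pow_add]; ring_nf
    _ = x := hx

theorem add_pow_add_pow_eq_zero [CharP F 2] (hx : x ^ (2 ^ e) ^ (3 * k) = x) :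
    S2k (2 ^ e) k x + S2k (2 ^ e) k x ^ (2 ^ e) ^ k + S2k (2 ^ e) k x ^ (2 ^ e) ^ (2 * k) = 0 := by
  have hmap (n : ℕ) : S2k (2 ^ e) k x ^ (2 ^ e) ^ n = S2k (2 ^ e) k (x ^ (2 ^ e) ^ n) := by
    rw [← pow_mul, apply_expChar_pow]
  rw [hmap, hmap, add_add_eq_two_mul_birkhoffSum hx, CharTwo.two_eq_zero, zero_mul]

end S2k

/-- Let `q` be a power of 2, `k ≥ 1`, and `L : F_{q^{3k}} → F_{q^{3k}}` additive with
(i) `L` maps the subfield `F_{q^k}` bijectively onto itself, and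
(ii) `L(x) + L(x)^{q^{2k}} = S_{2k}(x)^4` for all `x`.
Then `x ↦ L(x) + S_{2k}(x)^{q^k+3}` is a bijection of `F_{q^{3k}}`. -/
theorem stmt_1 (q e k : ℕ) (he : 0 < e) (hq : q = 2 ^ e) (hk : 0 < k)
    (F : Type*) [Field F] [Fintype F] (hF : Fintype.card F = q ^ (3 * k))
    (L : F → F) (hLadd : ∀ x y : F, L (x + y) = L x + L y)
    (hLbij : Set.BijOn L {x : F | x ^ q ^ k = x} {x : F | x ^ q ^ k = x})
    (hLid : ∀ x : F, L x + (L x) ^ q ^ (2 * k) = (S2k q k x) ^ 4) :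
    Function.Bijective (fun x : F => L x + (S2k q k x) ^ (q ^ k + 3)) := by
  subst hq
  have : CharP F 2 := charP_of_card_eq_prime_pow (hF.trans (pow_mul 2 e (3 * k)).symm)
  have hpow (x : F) : x ^ (2 ^ e) ^ (3 * k) = x := by rw [← hF, FiniteField.pow_card]
  let φ : F →+* F := iterateFrobenius F 2 (e * k)
  have hφ (x : F) : φ x = x ^ (2 ^ e) ^ k := by rw [iterateFrobenius_def, pow_mul]
  have hφφ (x : F) : φ (φ x) = x ^ (2 ^ e) ^ (2 * k) := by
    rw [hφ, hφ, ← pow_mul, ← pow_add, two_mul]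
  have hφ_three : φ^[3] = id := by
    ext x
    rw [← coe_iterateFrobenius_mul, iterateFrobenius_def, mul_assoc, mul_comm k, pow_mul, hpow, id]
  let Lhom : F →+ F := AddMonoidHom.mk' L hLadd
  let Shom : F →+ F := AddMonoidHom.mk' (S2k (2 ^ e) k) S2k.apply_add
  have hS (x : F) : Shom x + φ (Shom x) + φ (φ (Shom x)) = 0 := by
    rw [hφφ, hφ]
    exact S2k.add_pow_add_pow_eq_zero (hpow x)
  have hL (x : F) : Lhom x + φ (φ (Lhom x)) = Shom x ^ 4 := by
    rw [hφφ]
    exact hLid x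
  have hker (x : F) (hSx : Shom x = 0) (hLx : Lhom x = 0) : x = 0 :=
    hLbij.injOn (S2k.pow_eq_self_of_eq_zero (hpow x) hSx) ((hφ 0).symm.trans (map_zero φ))
      (hLx.trans (map_zero Lhom).symm)
  have hinj := injective_add_map_mul_pow_three hφ_three hS hL hker
  simp only [hφ, ← pow_add] at hinj
  exact Finite.injective_iff_bijective.1 hinj
end

section
/- Let q be a power of 2 and k ≥ 1 an integer. Then the map x ↦ (x + S_{2k}(x)^{q^{2k}})^{4 q^{3k-1}} + S_{2k}(x)^{q^k + 3} is a bijection of F_{q^{3k}}. -/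
/-!
Let `φ` be the `q`-Frobenius and `σ = φ ^ k`, an automorphism with `σ ^ 3 = 1`. Writing `S` for
`S_{2k}(x)` and `y = x + σ² S`, one has `S + σ S + σ² S = 0` and `φ S = S + x + σ² x`, whence
`φ S = y + σ² y`. Applying `φ` to the given map therefore yields `g y = y⁴ + (y + σ² y)³ (y + σ y)`,
and since `y` determines `S` and then `x`, it suffices to show that `g` is injective.

With `w = y + σ y` and the norm `N w = w · σ w · σ² w`, characteristic two gives
`g y + σ² (g y) = N w · w`. The norm of the right-hand side is `(N w)⁴`, so `g y` determines `N w`,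
then `w`, then `y⁴ = g y + (σ² w)³ w`, and finally `y`.
-/

theorem pow_four_injective (R : Type*) [CommRing R] [IsReduced R] [CharP R 2] :
    Function.Injective fun x : R ↦ x ^ 4 :=
  iterateFrobenius_inj R 2 2

section CubicNorm

variable {R : Type*} [CommRing R] {σ : R →+* R}

/-- The norm `x · σ x · σ² x` to the fixed ring of `σ`, for an endomorphism `σ` with
`σ ^ 3 = 1`. -/
def cubicNorm (σ : R →+* R) (x : R) : R :=
  x * σ x * σ (σ x)

theorem apply_apply_apply_of_pow_three_eq_one (hσ : σ ^ 3 = 1) (x : R) : σ (σ (σ x)) = x :=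
  DFunLike.congr_fun hσ x

theorem map_cubicNorm (hσ : σ ^ 3 = 1) (x : R) : σ (cubicNorm σ x) = cubicNorm σ x := by
  simp only [cubicNorm, map_mul, apply_apply_apply_of_pow_three_eq_one hσ]
  ring

theorem cubicNorm_cubicNorm_mul_self (hσ : σ ^ 3 = 1) (x : R) :
    cubicNorm σ (cubicNorm σ x * x) = cubicNorm σ x ^ 4 := by
  rw [cubicNorm, map_mul, map_mul, map_cubicNorm hσ, map_cubicNorm hσ]
  simp only [cubicNorm]
  ring

theorem cubicNorm_eq_zero_iff [NoZeroDivisors R] (hσ : σ ^ 3 = 1) {x : R} :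
    cubicNorm σ x = 0 ↔ x = 0 := by
  have hσ_inj : Function.Injective σ :=
    Function.LeftInverse.injective (g := σ ∘ σ) (apply_apply_apply_of_pow_three_eq_one hσ)
  simp only [cubicNorm, mul_eq_zero, map_eq_zero_iff σ hσ_inj, or_self]

theorem cubicNorm_mul_self_injective [IsDomain R] [CharP R 2] (hσ : σ ^ 3 = 1) :
    Function.Injective fun x : R ↦ cubicNorm σ x * x := by
  intro v w (hvw : cubicNorm σ v * v = cubicNorm σ w * w)
  have hnorm : cubicNorm σ v = cubicNorm σ w := by
    apply pow_four_injective R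
    simp only [← cubicNorm_cubicNorm_mul_self hσ, hvw]
  by_cases hw : cubicNorm σ w = 0
  · rw [(cubicNorm_eq_zero_iff hσ).mp hw, (cubicNorm_eq_zero_iff hσ).mp (hnorm.trans hw)]
  · exact mul_left_cancel₀ hw (hnorm ▸ hvw)

end CubicNorm

section TwistedQuartic

variable {R : Type*} [CommRing R] {σ : R →+* R}

/-- The map `y ↦ y⁴ + (y + σ² y)³ (y + σ y)` to which the map of the theorem reduces, `σ` being
the `q ^ k`-Frobenius. -/
def twistedQuartic (σ : R →+* R) (y : R) : R :=
  y ^ 4 + (y + σ (σ y)) ^ 3 * (y + σ y)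

theorem twistedQuartic_add_apply_apply [CharP R 2] (hσ : σ ^ 3 = 1) (y : R) :
    twistedQuartic σ y + σ (σ (twistedQuartic σ y)) = cubicNorm σ (y + σ y) * (y + σ y) := by
  simp only [twistedQuartic, cubicNorm, map_add, map_mul, map_pow,
    apply_apply_apply_of_pow_three_eq_one hσ]
  grind [CharTwo.two_eq_zero (R := R)]

theorem twistedQuartic_injective [IsDomain R] [CharP R 2] (hσ : σ ^ 3 = 1) :
    Function.Injective (twistedQuartic σ) := by
  intro y z hyz
  have hadd : y + σ y = z + σ z := by
    apply cubicNorm_mul_self_injective hσ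
    simp only [← twistedQuartic_add_apply_apply hσ, hyz]
  have hadd' : y + σ (σ y) = z + σ (σ z) := by
    have := congrArg (σ ∘ σ) hadd
    simpa only [Function.comp_apply, map_add, apply_apply_apply_of_pow_three_eq_one hσ,
      add_comm] using this
  apply pow_four_injective R
  rw [twistedQuartic, twistedQuartic, hadd, hadd'] at hyz
  exact add_right_cancel hyz

end TwistedQuartic

section OrbitSum

variable {R : Type*} [CommRing R]

theorem map_birkhoffSum_id (φ : R →+* R) (n : ℕ) (x : R) :
    φ (birkhoffSum φ id n x) = birkhoffSum φ id n x - x + (φ ^ n) x := by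
  have hcomm : φ (birkhoffSum φ id n x) = birkhoffSum φ id n (φ x) := by
    simp only [birkhoffSum, map_sum, id_eq, ← Function.iterate_succ_apply,
      Function.iterate_succ_apply']
  have hdiff := birkhoffSum_apply_sub_birkhoffSum φ id n x
  simp only [id_eq] at hdiff
  rw [hcomm, RingHom.coe_pow]
  linear_combination hdiff

theorem birkhoffSum_id_two_mul (φ : R →+* R) (k : ℕ) (x : R) :
    birkhoffSum φ id (2 * k) x = birkhoffSum φ id k x + (φ ^ k) (birkhoffSum φ id k x) := by
  rw [two_mul, birkhoffSum_add]
  simp only [birkhoffSum, map_sum, RingHom.coe_pow, id_eq, ← Function.iterate_add_apply, add_comm]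

variable [CharP R 2] {φ : R →+* R} {k : ℕ}

theorem birkhoffSum_id_two_mul_add_conjugates (hφ : (φ ^ k) ^ 3 = 1) (x : R) :
    birkhoffSum φ id (2 * k) x + (φ ^ k) (birkhoffSum φ id (2 * k) x) +
      (φ ^ k) ((φ ^ k) (birkhoffSum φ id (2 * k) x)) = 0 := by
  simp only [birkhoffSum_id_two_mul, map_add, apply_apply_apply_of_pow_three_eq_one hφ]
  grind [CharTwo.two_eq_zero (R := R)]

/-- The substitution `y = x + S^{q^{2k}}` of the theorem, with `S = S_{2k}(x)` and `φ` in place of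
the `q`-Frobenius. -/
def orbitSumShift (φ : R →+* R) (k : ℕ) (x : R) : R :=
  x + (φ ^ k) ((φ ^ k) (birkhoffSum φ id (2 * k) x))

theorem orbitSumShift_add_apply_apply (hφ : (φ ^ k) ^ 3 = 1) (x : R) :
    orbitSumShift φ k x + (φ ^ k) ((φ ^ k) (orbitSumShift φ k x)) =
      φ (birkhoffSum φ id (2 * k) x) := by
  have hpow : (φ ^ (2 * k)) x = (φ ^ k) ((φ ^ k) x) := by
    rw [two_mul, pow_add, RingHom.mul_def, RingHom.comp_apply]
  have hsum := birkhoffSum_id_two_mul_add_conjugates hφ x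
  rw [map_birkhoffSum_id, hpow]
  simp only [orbitSumShift, map_add, apply_apply_apply_of_pow_three_eq_one hφ]
  grind [CharTwo.two_eq_zero (R := R)]

theorem orbitSumShift_injective (hφ : (φ ^ k) ^ 3 = 1) (hinj : Function.Injective φ) :
    Function.Injective (orbitSumShift φ k) := by
  intro x z hxz
  have hsum : birkhoffSum φ id (2 * k) x = birkhoffSum φ id (2 * k) z := by
    apply hinj
    rw [← orbitSumShift_add_apply_apply hφ, ← orbitSumShift_add_apply_apply hφ, hxz]
  rw [orbitSumShift, orbitSumShift, hsum] at hxz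
  exact add_right_cancel hxz

theorem twistedQuartic_orbitSumShift (hφ : (φ ^ k) ^ 3 = 1) (x : R) :
    twistedQuartic (φ ^ k) (orbitSumShift φ k x) = orbitSumShift φ k x ^ 4 +
      φ (birkhoffSum φ id (2 * k) x ^ 3 * (φ ^ k) (birkhoffSum φ id (2 * k) x)) := by
  have hcomm (t : R) : (φ ^ k) (φ t) = φ ((φ ^ k) t) :=
    DFunLike.congr_fun (pow_mul_comm' φ k) t
  have hconj : orbitSumShift φ k x + (φ ^ k) (orbitSumShift φ k x) =
      (φ ^ k) (φ (birkhoffSum φ id (2 * k) x)) := by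
    rw [← orbitSumShift_add_apply_apply hφ, map_add, apply_apply_apply_of_pow_three_eq_one hφ,
      add_comm]
  rw [twistedQuartic, hconj, orbitSumShift_add_apply_apply hφ, hcomm, map_mul, map_pow]

end OrbitSum

section Frobenius

theorem iterateFrobenius_pow_apply (R : Type*) [CommSemiring R] (p : ℕ) [ExpChar R p] (m n : ℕ)
    (x : R) : (iterateFrobenius R p m ^ n) x = x ^ (p ^ m) ^ n := by
  rw [RingHom.coe_pow, ← iterateFrobenius_mul_apply, iterateFrobenius_def, pow_mul]

theorem iterateFrobenius_pow_pow_three_eq_one {R : Type*} [CommSemiring R] {p : ℕ} [ExpChar R p]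
    {m n : ℕ} (hpow : ∀ x : R, x ^ (p ^ m) ^ (3 * n) = x) :
    (iterateFrobenius R p m ^ n) ^ 3 = 1 := by
  ext x
  rw [← pow_mul, mul_comm, iterateFrobenius_pow_apply, hpow, RingHom.coe_one, id_eq]

variable {F : Type*} [Field F] [CharP F 2]

theorem S2k_eq_birkhoffSum (e k : ℕ) (x : F) :
    S2k (2 ^ e) k x = birkhoffSum (iterateFrobenius F 2 e) id (2 * k) x := by
  simp only [S2k, birkhoffSum, id_eq, ← RingHom.coe_pow, iterateFrobenius_pow_apply]

theorem orbitSumShift_iterateFrobenius (e k : ℕ) (x : F) :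
    orbitSumShift (iterateFrobenius F 2 e) k x =
      x + S2k (2 ^ e) k x ^ (2 ^ e) ^ (2 * k) := by
  rw [orbitSumShift, ← S2k_eq_birkhoffSum, iterateFrobenius_pow_apply, iterateFrobenius_pow_apply,
    ← pow_mul, ← pow_add, two_mul]

theorem iterateFrobenius_eq_twistedQuartic_orbitSumShift {e k : ℕ} (hk : 0 < k)
    (hpow : ∀ x : F, x ^ (2 ^ e) ^ (3 * k) = x) (x : F) :
    iterateFrobenius F 2 e
        ((x + S2k (2 ^ e) k x ^ (2 ^ e) ^ (2 * k)) ^ (4 * (2 ^ e) ^ (3 * k - 1)) +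
          S2k (2 ^ e) k x ^ ((2 ^ e) ^ k + 3)) =
      twistedQuartic (iterateFrobenius F 2 e ^ k)
        (orbitSumShift (iterateFrobenius F 2 e) k x) := by
  have hquartic (y : F) : iterateFrobenius F 2 e (y ^ (4 * (2 ^ e) ^ (3 * k - 1))) = y ^ 4 := by
    rw [iterateFrobenius_def, ← pow_mul, mul_assoc, ← pow_succ, Nat.sub_add_cancel (by lia),
      pow_mul, hpow]
  rw [twistedQuartic_orbitSumShift (iterateFrobenius_pow_pow_three_eq_one hpow),
    ← S2k_eq_birkhoffSum, iterateFrobenius_pow_apply, ← pow_add, add_comm 3, map_add, hquartic,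
    orbitSumShift_iterateFrobenius]

end Frobenius

/-- Let `q` be a power of 2 and `k ≥ 1`. Then the map
`x ↦ (x + S_{2k}(x)^{q^{2k}})^{4 q^{3k-1}} + S_{2k}(x)^{q^k+3}`
is a bijection of `F_{q^{3k}}`. -/
theorem stmt_3 (q e k : ℕ) (he : 0 < e) (hq : q = 2 ^ e) (hk : 0 < k)
    (F : Type*) [Field F] [Fintype F] (hF : Fintype.card F = q ^ (3 * k)) :
    Function.Bijective (fun x : F =>
      (x + (S2k q k x) ^ q ^ (2 * k)) ^ (4 * q ^ (3 * k - 1)) +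
        (S2k q k x) ^ (q ^ k + 3)) := by
  subst hq
  have : CharP F 2 := charP_of_card_eq_prime_pow (f := e * (3 * k)) (by rw [hF, ← pow_mul])
  have hpow (x : F) : x ^ (2 ^ e) ^ (3 * k) = x := hF ▸ FiniteField.pow_card x
  have hφ : (iterateFrobenius F 2 e ^ k) ^ 3 = 1 := iterateFrobenius_pow_pow_three_eq_one hpow
  refine Finite.injective_iff_bijective.mp fun x z hxz ↦ ?_
  apply orbitSumShift_injective hφ (iterateFrobenius_inj F 2 e)
  apply twistedQuartic_injective hφ
  simpa only [iterateFrobenius_eq_twistedQuartic_orbitSumShift hk hpow] using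
    congrArg (iterateFrobenius F 2 e) hxz
end

section
/- Let q be a power of 2 and k ≥ 1 an integer. Then the set of zeros of S_{2k} in F_{q^{3k}} is exactly the subfield F_{q^k}; that is, {x ∈ F_{q^{3k}} : S_{2k}(x) = 0} = {x ∈ F_{q^{3k}} : x^{q^k} = x}. -/
/-!
Let `φ` be the `q`-power Frobenius, so that `S_n x` is the sum of the first `n` points of the
`φ`-orbit of `x`. Since `φ` is additive, `φ (S_n x) - S_n x` telescopes to `φ^n x - x`; thus
`S_n x = 0` forces `φ^n x = x`. With `n = 2k`, combining this with `φ^(3k) x = x` gives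
`φ^k x = x`. Conversely, if `φ^k x = x` then `S_{2k} x = 2 S_k x = 0`.
The same argument works with any multiple of the characteristic in place of `2`.
-/

open Function

theorem birkhoffSum_mul_of_isPeriodicPt {α M : Type*} [AddCommMonoid M] {f : α → α} {n : ℕ} {x : α}
    (hx : IsPeriodicPt f n x) (g : α → M) (m : ℕ) :
    birkhoffSum f g (m * n) x = m • birkhoffSum f g n x := by
  induction m with
  | zero => simp
  | succ m ih => rw [Nat.succ_mul, birkhoffSum_add, (hx.const_mul m).eq, ih, succ_nsmul]

section AddCommGroup

variable {M : Type*} [AddCommGroup M] (f : M →+ M)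

theorem map_birkhoffSum_id_sub (n : ℕ) (x : M) :
    f (birkhoffSum f id n x) - birkhoffSum f id n x = f^[n] x - x := by
  have map_eq : f (birkhoffSum f id n x) = birkhoffSum f id n (f x) := by
    simp only [birkhoffSum, map_sum, id_eq, ← iterate_succ_apply, iterate_succ_apply']
  rw [map_eq, birkhoffSum_apply_sub_birkhoffSum, id_eq, id_eq]

variable {f}

theorem isPeriodicPt_of_birkhoffSum_id_eq_zero {n : ℕ} {x : M} (h : birkhoffSum f id n x = 0) :
    IsPeriodicPt f n x := by
  have telescope := map_birkhoffSum_id_sub f n x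
  rw [h, map_zero, sub_zero] at telescope
  exact sub_eq_zero.mp telescope.symm

theorem isPeriodicPt_and_birkhoffSum_id_eq_zero_iff {m : ℕ} (hm : ∀ y : M, m • y = 0) {n : ℕ}
    {x : M} :
    IsPeriodicPt f ((m + 1) * n) x ∧ birkhoffSum f id (m * n) x = 0 ↔ IsPeriodicPt f n x := by
  constructor
  · rintro ⟨hx, hsum⟩
    rw [Nat.succ_mul] at hx
    exact hx.right_of_add (isPeriodicPt_of_birkhoffSum_id_eq_zero hsum)
  · intro hx
    exact ⟨hx.const_mul (m + 1), by rw [birkhoffSum_mul_of_isPeriodicPt hx, hm]⟩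

end AddCommGroup

theorem stmt_6_general {R : Type*} [CommRing R] (p : ℕ) [ExpChar R p] {m : ℕ} (hm : (m : R) = 0)
    (e k : ℕ) :
    {x : R | x ^ (p ^ e) ^ ((m + 1) * k) = x ∧
        ∑ i ∈ Finset.range (m * k), x ^ (p ^ e) ^ i = 0} =
      {x : R | x ^ (p ^ e) ^ k = x} := by
  have iterate_eq (n : ℕ) (x : R) :
      (iterateFrobenius R p e : R →+ R)^[n] x = x ^ (p ^ e) ^ n :=
    congrFun (pow_iterate (p ^ e) n) x
  have nsmul_eq_zero (y : R) : m • y = 0 := by rw [nsmul_eq_mul, hm, zero_mul]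
  ext x
  simpa only [Set.mem_ofPred_eq, IsPeriodicPt, IsFixedPt, birkhoffSum, iterate_eq, id_eq] using
    isPeriodicPt_and_birkhoffSum_id_eq_zero_iff (f := (iterateFrobenius R p e : R →+ R))
      nsmul_eq_zero (n := k) (x := x)

/-- Let `q` be a power of 2 and `k ≥ 1`. Then the zero set of `S_{2k}` in `F_{q^{3k}}`
is exactly the subfield `F_{q^k} = {x : x^{q^k} = x}`. -/
theorem stmt_6 (q e k : ℕ) (he : 0 < e) (hq : q = 2 ^ e) (hk : 0 < k)
    (F : Type*) [Field F] [Fintype F] (hF : Fintype.card F = q ^ (3 * k)) :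
    {x : F | S2k q k x = 0} = {x : F | x ^ q ^ k = x} := by
  subst hq
  have : CharP F 2 := charP_of_card_eq_prime_pow (hF.trans (pow_mul 2 e (3 * k)).symm)
  have pow_eq_self (x : F) : x ^ (2 ^ e) ^ (3 * k) = x := hF ▸ FiniteField.pow_card x
  simpa only [S2k, pow_eq_self, true_and] using
    stmt_6_general 2 (CharP.cast_eq_zero F 2) e k
end

section
/- Let q be a power of 2 and k ≥ 1 an integer. Then the image of the map S_{2k} : F_{q^{3k}} → F_{q^{3k}} is exactly the kernel of the relative trace Tr_{q^{3k}/q^k}; that is, {S_{2k}(x) : x ∈ F_{q^{3k}}} = {y ∈ F_{q^{3k}} : y + y^{q^k} + y^{q^{2k}} = 0}. -/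
/-!
Let `φ` be the additive map `x ↦ x ^ q`, so that `φ ^ (3k) = 1`. Put `S = ∑_{i < 2k} φ ^ i` and
`T = 1 + φ ^ k + φ ^ (2k)`. In characteristic two, `S = (φ ^ k - 1) ∑_{i < k} φ ^ i`, hence
`T S = 0` because `T (φ ^ k - 1) = φ ^ (3k) - 1 = 0`. Conversely `S (φ - 1) = φ ^ (2k) - 1`, hence
`S (φ - 1) φ ^ (2k) = φ ^ k - φ ^ (2k) = T - 1`, so `S` maps onto the kernel of `T`.
-/

section CharTwoRing

variable {A : Type*} [Ring A] [CharP A 2] {a : A} {k : ℕ}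

theorem geom_sum_two_mul_eq_pow_sub_one_mul (a : A) (k : ℕ) :
    ∑ i ∈ Finset.range (2 * k), a ^ i = (a ^ k - 1) * ∑ i ∈ Finset.range k, a ^ i := by
  rw [two_mul, Finset.sum_range_add, CharTwo.sub_eq_add, add_mul, one_mul, add_comm]
  simp only [pow_add, Finset.mul_sum]

theorem one_add_pow_add_pow_mul_geom_sum_eq_zero (ha : a ^ (3 * k) = 1) :
    (1 + a ^ k + a ^ (2 * k)) * ∑ i ∈ Finset.range (2 * k), a ^ i = 0 := by
  have telescope : (1 + a ^ k + a ^ (2 * k)) * (a ^ k - 1) = a ^ (3 * k) - 1 := by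
    simpa [Finset.sum_range_succ, ← pow_mul, mul_comm k] using geom_sum_mul (a ^ k) 3
  rw [geom_sum_two_mul_eq_pow_sub_one_mul, ← mul_assoc, telescope, ha, sub_self, zero_mul]

theorem geom_sum_mul_sub_one_mul_pow (ha : a ^ (3 * k) = 1) :
    (∑ i ∈ Finset.range (2 * k), a ^ i) * ((a - 1) * a ^ (2 * k)) =
      1 + a ^ k + a ^ (2 * k) - 1 :=
  calc
    _ = a ^ (3 * k + k) - a ^ (2 * k) := by
      rw [← mul_assoc, geom_sum_mul, sub_mul, one_mul, ← pow_add,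
        show 2 * k + 2 * k = 3 * k + k by ring]
    _ = a ^ k + a ^ (2 * k) := by rw [pow_add, ha, one_mul, CharTwo.sub_eq_add]
    _ = _ := by abel

end CharTwoRing

theorem exact_geom_sum_one_add_pow_add_pow {S M : Type*} [Semiring S] [AddCommGroup M] [Module S M]
    [CharP (Module.End S M) 2] {φ : Module.End S M} {k : ℕ} (hφ : φ ^ (3 * k) = 1) :
    Function.Exact (∑ i ∈ Finset.range (2 * k), φ ^ i : Module.End S M)
      (1 + φ ^ k + φ ^ (2 * k) : Module.End S M) := by
  intro y
  constructor
  · intro hy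
    refine ⟨((φ - 1) * φ ^ (2 * k)) (-y), ?_⟩
    rw [← Module.End.mul_apply, geom_sum_mul_sub_one_mul_pow hφ, map_neg,
      LinearMap.sub_apply, hy, Module.End.one_apply, zero_sub, neg_neg]
  · rintro ⟨x, rfl⟩
    rw [← Module.End.mul_apply, one_add_pow_add_pow_mul_geom_sum_eq_zero hφ,
      LinearMap.zero_apply]

theorem iterateFrobenius_toIntLinearMap_pow_apply {R : Type*} [CommRing R] (p : ℕ) [ExpChar R p]
    (e n : ℕ) (x : R) :
    ((iterateFrobenius R p e).toAddMonoidHom.toIntLinearMap ^ n : Module.End ℤ R) x =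
      x ^ (p ^ e) ^ n := by
  rw [Module.End.pow_apply, ← pow_mul, ← iterateFrobenius_def, iterateFrobenius_mul_apply]
  rfl

theorem stmt_7_general {R : Type*} [CommRing R] [CharP R 2] (e k : ℕ)
    (hR : ∀ x : R, x ^ (2 ^ e) ^ (3 * k) = x) :
    Set.range (fun x : R => ∑ i ∈ Finset.range (2 * k), x ^ (2 ^ e) ^ i) =
      {y : R | y + y ^ (2 ^ e) ^ k + y ^ (2 ^ e) ^ (2 * k) = 0} := by
  have : CharP (Module.End ℤ R) 2 :=
    charP_of_injective_ringHom (f := (Algebra.lmul ℤ R).toRingHom) Algebra.lmul_injective 2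
  let φ : Module.End ℤ R := (iterateFrobenius R 2 e).toAddMonoidHom.toIntLinearMap
  have φ_pow_apply (n : ℕ) (x : R) : (φ ^ n) x = x ^ (2 ^ e) ^ n :=
    iterateFrobenius_toIntLinearMap_pow_apply 2 e n x
  have hφ : φ ^ (3 * k) = 1 := LinearMap.ext fun x => (φ_pow_apply _ x).trans (hR x)
  ext y
  simpa [φ_pow_apply] using (exact_geom_sum_one_add_pow_add_pow hφ y).symm

/-- Let `q` be a power of 2 and `k ≥ 1`. Then the image of `S_{2k}` on `F_{q^{3k}}` is
exactly the kernel of the relative trace `Tr_{q^{3k}/q^k}(y) = y + y^{q^k} + y^{q^{2k}}`. -/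
theorem stmt_7 (q e k : ℕ) (he : 0 < e) (hq : q = 2 ^ e) (hk : 0 < k)
    (F : Type*) [Field F] [Fintype F] (hF : Fintype.card F = q ^ (3 * k)) :
    Set.range (fun x : F => S2k q k x)
      = {y : F | y + y ^ q ^ k + y ^ q ^ (2 * k) = 0} := by
  subst hq
  have : CharP F 2 := charP_of_card_eq_prime_pow (hF.trans (pow_mul 2 e (3 * k)).symm)
  exact stmt_7_general e k fun x => hF ▸ FiniteField.pow_card x
end

section
/- Let q = 4 and k ≥ 1 an integer, and let g(x) = x + S_{2k}(x)^{q^{2k}} + S_{2k}(x)^{q^k+3}. Then for every c ∈ F_{q^{3k}} and every x ∈ F_{q^{3k}}, Tr((c + c^{q^k}) · g(x)) = Tr(c · S_{2k}(x)^{1 + 2q^k + q^{2k}}), where Tr = Tr_{q^{3k}/2} is the absolute trace to F_2. -/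
/-- The absolute trace to `F_2` of a field with `2^m` elements:
`Tr(x) = x + x^2 + x^4 + ⋯ + x^{2^{m-1}}`. -/
def absTr (m : ℕ) {F : Type*} [Field F] (x : F) : F :=
  ∑ i ∈ Finset.range m, x ^ 2 ^ i

/-!
Let `σ` be the `q^k`-power Frobenius, so that `σ³ = 1`. As `Tr` is `σ`-invariant,
`Tr((c + σc) g) = Tr(c (g + σ²g))`, and the claim reduces to `g + σ²g = A · (σA)² · σ²A` for
`A = S_{2k}(x)`. Telescoping gives `x + σ²x = A + A⁴`, while `A + σA + σ²A` is twice the trace of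
`x` to `F_q`, hence zero. What remains is a polynomial identity in `A` and `σA`.
-/

section PowerSums

variable {F : Type*} [Field F] {p n q : ℕ} [ExpChar F p]

lemma S2k_pow_pow (hq : q = p ^ n) (k j : ℕ) (x : F) :
    S2k q k x ^ q ^ j = ∑ i ∈ Finset.range (2 * k), x ^ q ^ (j + i) := by
  have hsum (f : ℕ → F) : (∑ i ∈ Finset.range (2 * k), f i) ^ q ^ j =
      ∑ i ∈ Finset.range (2 * k), f i ^ q ^ j := by
    rw [hq, ← pow_mul, sum_pow_char_pow]
  simp only [S2k, hsum, ← pow_mul, ← pow_add, add_comm j]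

lemma S2k_pow_eq_self (hq : q = p ^ n) (k : ℕ) {m : ℕ} {x : F} (hx : x ^ q ^ m = x) :
    S2k q k x ^ q ^ m = S2k q k x := by
  rw [S2k_pow_pow hq]
  simp only [pow_add, pow_mul, hx, S2k]

lemma S2k_pow_sub_self (hq : q = p ^ n) (k : ℕ) (x : F) :
    S2k q k x ^ q - S2k q k x = x ^ q ^ (2 * k) - x := by
  calc S2k q k x ^ q - S2k q k x
      = ∑ i ∈ Finset.range (2 * k), (x ^ q ^ (i + 1) - x ^ q ^ i) := by
        have hpow := S2k_pow_pow hq k 1 x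
        rw [pow_one] at hpow
        rw [hpow]
        simp only [Finset.sum_sub_distrib, add_comm 1, S2k]
    _ = x ^ q ^ (2 * k) - x := by
        rw [Finset.sum_range_sub (fun i ↦ x ^ q ^ i), pow_zero, pow_one]

lemma S2k_add_pow_add_pow (hq : q = p ^ n) {k : ℕ} {x : F} (hx : x ^ q ^ (3 * k) = x) :
    S2k q k x + S2k q k x ^ q ^ k + S2k q k x ^ q ^ (2 * k) =
      2 * ∑ i ∈ Finset.range (3 * k), x ^ q ^ i := by
  have hperiod (i : ℕ) : x ^ q ^ (k + (k + (k + i))) = x ^ q ^ i := by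
    rw [show k + (k + (k + i)) = 3 * k + i by ring, pow_add, pow_mul, hx]
  rw [S2k_pow_pow hq, S2k_pow_pow hq, S2k, show 3 * k = k + k + k by ring]
  simp only [two_mul k, Finset.sum_range_add, add_assoc, hperiod]
  ring

end PowerSums

section Trace

variable {F : Type*} [Field F] {m : ℕ}

lemma absTr_add [CharP F 2] (a b : F) : absTr m (a + b) = absTr m a + absTr m b := by
  simp only [absTr, add_pow_char_pow, Finset.sum_add_distrib]

lemma absTr_sq {a : F} (ha : a ^ 2 ^ m = a) : absTr m (a ^ 2) = absTr m a := by
  have hshift : absTr m (a ^ 2) + a = absTr m a + a ^ 2 ^ m := by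
    have hsum := Finset.sum_range_succ' (fun i ↦ a ^ 2 ^ i) m
    rw [Finset.sum_range_succ, pow_zero, pow_one] at hsum
    simp only [absTr, ← pow_mul, ← pow_succ', hsum]
  rw [ha] at hshift
  exact add_right_cancel hshift

lemma absTr_pow_two_pow {a : F} (ha : a ^ 2 ^ m = a) (n : ℕ) :
    absTr m (a ^ 2 ^ n) = absTr m a := by
  induction n with
  | zero => rw [pow_zero, pow_one]
  | succ n ih => rw [pow_succ, pow_mul, absTr_sq (by rw [pow_right_comm, ha]), ih]

lemma absTr_pow_mul {n l : ℕ} {c y : F} (hc : c ^ 2 ^ (n + l) = c) (hy : y ^ 2 ^ (n + l) = y) :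
    absTr (n + l) (c ^ 2 ^ n * y) = absTr (n + l) (c * y ^ 2 ^ l) := by
  have hfix : (c * y ^ 2 ^ l) ^ 2 ^ (n + l) = c * y ^ 2 ^ l := by
    rw [mul_pow, hc, pow_right_comm, hy]
  rw [← absTr_pow_two_pow hfix n, mul_pow, ← pow_mul y, ← pow_add, add_comm l, hy]

lemma absTr_add_pow_mul [CharP F 2] {n l : ℕ} {c y : F} (hc : c ^ 2 ^ (n + l) = c)
    (hy : y ^ 2 ^ (n + l) = y) :
    absTr (n + l) ((c + c ^ 2 ^ n) * y) = absTr (n + l) (c * (y + y ^ 2 ^ l)) := by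
  rw [add_mul, absTr_add, absTr_pow_mul hc hy, ← absTr_add, ← mul_add]

end Trace

section CharTwo

variable {R : Type*}

lemma add_pow_four_pow [CommSemiring R] [CharP R 2] (a b : R) (j : ℕ) :
    (a + b) ^ 4 ^ j = a ^ 4 ^ j + b ^ 4 ^ j := by
  rw [show 4 = 2 ^ 2 by rfl, ← pow_mul, add_pow_char_pow]

lemma pow_four_add_of_add_add_eq_zero [CommRing R] [CharP R 2] {a b c : R}
    (h : a + b + c = 0) : a ^ 4 + a ^ 3 * b + a * c ^ 3 = a * b ^ 2 * c := by
  have htwo : (2 : R) = 0 := CharTwo.two_eq_zero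
  obtain rfl : c = a + b := (CharTwo.add_eq_zero.mp h).symm
  linear_combination (a ^ 4 + 2 * a ^ 3 * b + a ^ 2 * b ^ 2) * htwo

end CharTwo

section GMap

variable {F : Type*} [Field F]

/-- The map `g(x) = x + S_{2k}(x)^{q^{2k}} + S_{2k}(x)^{q^k+3}` at `q = 4`, whose trace
against `c + c^{q^k}` is computed below. -/
def gMap (k : ℕ) (x : F) : F :=
  x + S2k 4 k x ^ 4 ^ (2 * k) + S2k 4 k x ^ (4 ^ k + 3)

variable [CharP F 2] {k : ℕ}

lemma gMap_pow_eq_self {m : ℕ} {x : F} (hx : x ^ 4 ^ m = x) :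
    gMap k x ^ 4 ^ m = gMap k x := by
  have hS : S2k 4 k x ^ 4 ^ m = S2k 4 k x := S2k_pow_eq_self (p := 2) (n := 2) rfl k hx
  simp only [gMap, add_pow_four_pow, pow_right_comm _ _ (4 ^ m), hx, hS]

lemma gMap_add_pow {x : F} (hx : x ^ 4 ^ (3 * k) = x) :
    gMap k x + gMap k x ^ 4 ^ (2 * k) = S2k 4 k x ^ (1 + 2 * 4 ^ k + 4 ^ (2 * k)) := by
  have htwo : (2 : F) = 0 := CharTwo.two_eq_zero
  have hfour : 4 = 2 ^ 2 := rfl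
  have hfix : S2k 4 k x ^ 4 ^ (3 * k) = S2k 4 k x := S2k_pow_eq_self hfour k hx
  have hzero := S2k_add_pow_add_pow hfour hx
  have htelescope := S2k_pow_sub_self hfour k x
  rw [htwo, zero_mul] at hzero
  have hkey := pow_four_add_of_add_add_eq_zero hzero
  set a := S2k 4 k x
  set b := a ^ 4 ^ k with hb
  set c := a ^ 4 ^ (2 * k) with hc
  have hb_pow : b ^ 4 ^ (2 * k) = a := by
    rw [hb, ← pow_mul, ← pow_add, show k + 2 * k = 3 * k by ring, hfix]
  have hc_pow : c ^ 4 ^ (2 * k) = b := by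
    rw [hc, ← pow_mul, ← pow_add, show 2 * k + 2 * k = 3 * k + k by ring, pow_add, pow_mul, hfix]
  have hg : gMap k x = x + c + b * a ^ 3 := by rw [gMap, pow_add]
  have hg_pow : gMap k x ^ 4 ^ (2 * k) = x ^ 4 ^ (2 * k) + b + a * c ^ 3 := by
    rw [hg, add_pow_four_pow, add_pow_four_pow, mul_pow, pow_right_comm a 3, hb_pow, hc_pow]
  have hmonomial : a ^ (1 + 2 * 4 ^ k + 4 ^ (2 * k)) = a * b ^ 2 * c := by
    rw [pow_add, pow_add, pow_one, mul_comm 2, pow_mul]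
  rw [hmonomial, hg_pow, hg]
  linear_combination hkey - htelescope + hzero + (x - a) * htwo

end GMap

theorem stmt_8_general {F : Type*} [Field F] [CharP F 2] {k : ℕ} {c x : F}
    (hc : c ^ 4 ^ (3 * k) = c) (hx : x ^ 4 ^ (3 * k) = x) :
    absTr (6 * k) ((c + c ^ 4 ^ k) *
        (x + (S2k 4 k x) ^ 4 ^ (2 * k) + (S2k 4 k x) ^ (4 ^ k + 3)))
      = absTr (6 * k) (c * (S2k 4 k x) ^ (1 + 2 * 4 ^ k + 4 ^ (2 * k))) := by
  have hpow (j : ℕ) : 4 ^ j = 2 ^ (2 * j) := (pow_mul 2 2 j).symm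
  have hdegree : 2 * (3 * k) = 2 * k + 2 * (2 * k) := by ring
  have hg : gMap k x ^ 4 ^ (3 * k) = gMap k x := gMap_pow_eq_self hx
  change absTr (6 * k) ((c + c ^ 4 ^ k) * gMap k x) = _
  rw [← gMap_add_pow hx, show 6 * k = 2 * k + 2 * (2 * k) by ring, hpow k, hpow (2 * k)]
  rw [hpow, hdegree] at hc hg
  exact absTr_add_pow_mul hc hg

/-- For `q = 4`, `k ≥ 1` and `g(x) = x + S_{2k}(x)^{q^{2k}} + S_{2k}(x)^{q^k+3}`:
for all `c, x ∈ F_{q^{3k}}`,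
`Tr((c + c^{q^k})·g(x)) = Tr(c·S_{2k}(x)^{1+2q^k+q^{2k}})`,
where `Tr = Tr_{q^{3k}/2}` (note `4^{3k} = 2^{6k}`). -/
theorem stmt_8 (k : ℕ) (hk : 0 < k)
    (F : Type*) [Field F] [Fintype F] (hF : Fintype.card F = 4 ^ (3 * k))
    (c x : F) :
    absTr (6 * k) ((c + c ^ 4 ^ k) *
        (x + (S2k 4 k x) ^ 4 ^ (2 * k) + (S2k 4 k x) ^ (4 ^ k + 3)))
      = absTr (6 * k) (c * (S2k 4 k x) ^ (1 + 2 * 4 ^ k + 4 ^ (2 * k))) := by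
  have : CharP F 2 := charP_of_card_eq_prime_pow (hF.trans (pow_mul 2 2 (3 * k)).symm)
  exact stmt_8_general (hF ▸ FiniteField.pow_card c) (hF ▸ FiniteField.pow_card x)
end

section
/- Let q be a power of 2 and k ≥ 1 an integer. Let T_0 = {x ∈ F_{q^{3k}} : x + x^{q^k} + x^{q^{2k}} = 0}, and let d_1, d_2 be a basis of T_0 over F_{q^k}. Then for every c ∈ F_{q^{3k}}, Σ_{x ∈ T_0} (−1)^{Tr(c · x^{1 + 2q^k + q^{2k}})} = (Σ_{x ∈ F_{q^k}} (−1)^{Tr(c · d_1^{q^k} · x)}) · (Σ_{y ∈ F_{q^k}} (−1)^{Tr(c · d_2^{q^k} · y)}), where Tr = Tr_{q^{3k}/2} is the absolute trace to F_2. -/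
/-- `(-1)^a` for `a ∈ F_2 ⊆ F`: `1` if `a = 0`, `-1` otherwise. -/
def chi {F : Type*} [Field F] [DecidableEq F] (a : F) : ℤ :=
  if a = 0 then 1 else -1

/-!
Write `K = F_{q^k}`, `L = F_{q^{3k}}`, let `N` be the norm of `L / K` and `σ x = x ^ q^k`. Then
`x ^ (1 + 2 q^k + q^{2k}) = N(x) σ(x)`, and `N(N(x) σ(x)) = N(x) ^ 4`. In characteristic two fourth
powers are injective on `K`, so `N(N(x) σ(x))` determines `N(x)`, and `N(x) σ(x)` determines `x`.
Hence `x ↦ N(x) σ(x)` permutes `T₀`, as does `σ`, and the sum on the left equals the sum of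
`(-1) ^ Tr(c σ(x))` over `T₀`; this is a sum of an additive character over a vector space, which
factors along any basis.
-/

open Finset Module

theorem norm_norm_smul_apply {R S : Type*} [CommRing R] [Ring S] [Algebra R S] [Free R S]
    (σ : S ≃ₐ[R] S) (x : S) :
    Algebra.norm R (Algebra.norm R x • σ x) = Algebra.norm R x ^ (finrank R S + 1) := by
  rw [Algebra.smul_def, map_mul, Algebra.norm_algebraMap, Algebra.norm_eq_of_algEquiv, pow_succ]

theorem injective_norm_smul_apply {K L : Type*} [Field K] [Field L] [Algebra K L]
    [FiniteDimensional K L] (hpow : Function.Injective fun a : K ↦ a ^ (finrank K L + 1))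
    (σ : L ≃ₐ[K] L) : Function.Injective fun x : L ↦ Algebra.norm K x • σ x := by
  intro x y (hxy : Algebra.norm K x • σ x = Algebra.norm K y • σ y)
  have hnorm : Algebra.norm K x = Algebra.norm K y := hpow <| by
    simp only [← norm_norm_smul_apply σ, hxy]
  by_cases hx : Algebra.norm K x = 0
  · rw [Algebra.norm_eq_zero_iff.1 hx, Algebra.norm_eq_zero_iff.1 (hnorm.symm.trans hx)]
  · rw [← hnorm] at hxy
    exact σ.injective (smul_right_injective L hx hxy)

theorem sum_comp_of_injOn_of_mapsTo {α M : Type*} [AddCommMonoid M] {s : Set α} [Fintype s]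
    {f : α → α} (hf : Set.InjOn f s) (hs : Set.MapsTo f s s) (g : α → M) :
    ∑ x : s, g (f x) = ∑ x : s, g x :=
  (Finite.injective_iff_bijective.1 (hs.restrict_inj.2 hf)).sum_comp fun x : s ↦ g x

theorem addChar_map_sum {A M ι : Type*} [AddCommMonoid A] [CommMonoid M] (ψ : AddChar A M)
    (s : Finset ι) (f : ι → A) : ψ (∑ i ∈ s, f i) = ∏ i ∈ s, ψ (f i) :=
  map_sum ψ.toAddMonoidHom f s

theorem sum_addChar_apply_eq_prod_basis {K V W R ι : Type*} [Semiring K] [Fintype K]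
    [AddCommMonoid V] [Module K V] [Fintype V] [AddCommMonoid W] [Module K W] [CommSemiring R]
    [Fintype ι] (b : Basis ι K V) (f : V →ₗ[K] W) (ψ : AddChar W R) :
    ∑ x, ψ (f x) = ∏ i, ∑ a : K, ψ (a • f (b i)) := by
  classical
  calc ∑ x, ψ (f x) = ∑ a : ι → K, ψ (f (b.equivFun.symm a)) :=
        (b.equivFun.symm.toEquiv.sum_comp fun x ↦ ψ (f x)).symm
    _ = ∑ a : ι → K, ∏ i, ψ (a i • f (b i)) := by
        simp only [Basis.equivFun_symm_apply, map_sum, map_smul, addChar_map_sum]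
    _ = ∏ i, ∑ a : K, ψ (a • f (b i)) := by
        rw [Finset.prod_univ_sum, Fintype.piFinset_univ]

theorem sum_addChar_norm_smul_eq_prod_basis {K L R ι : Type*} [Field K] [Fintype K] [Field L]
    [Algebra K L] [FiniteDimensional K L] [CommSemiring R] [Fintype ι]
    (hpow : Function.Injective fun a : K ↦ a ^ (finrank K L + 1)) (σ : L ≃ₐ[K] L)
    {V : Submodule K L} [Fintype V] (hV : ∀ x ∈ V, σ x ∈ V) (b : Basis ι K V) (ψ : AddChar L R) :
    ∑ x : V, ψ (Algebra.norm K (x : L) • σ x) = ∏ i, ∑ a : K, ψ (a • σ (b i)) :=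
  calc ∑ x : V, ψ (Algebra.norm K (x : L) • σ x) = ∑ x : V, ψ x :=
        sum_comp_of_injOn_of_mapsTo (injective_norm_smul_apply hpow σ).injOn
          (fun x hx ↦ V.smul_mem _ (hV x hx)) ψ
    _ = ∑ x : V, ψ (σ x) := (sum_comp_of_injOn_of_mapsTo σ.injective.injOn hV ψ).symm
    _ = ∏ i, ∑ a : K, ψ (a • σ (b i)) :=
        sum_addChar_apply_eq_prod_basis b (σ.toLinearMap ∘ₗ V.subtype) ψ

theorem exists_basis_fin_two {K M : Type*} [Ring K] [AddCommGroup M] [Module K M]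
    {V : Submodule K M} {v w : M} (hv : v ∈ V) (hw : w ∈ V) (hli : LinearIndependent K ![v, w])
    (hspan : ∀ x ∈ V, ∃ a b : K, a • v + b • w = x) :
    ∃ b : Basis (Fin 2) K V, (b 0 : M) = v ∧ (b 1 : M) = w := by
  have hli' : LinearIndependent K ![(⟨v, hv⟩ : V), ⟨w, hw⟩] := by
    simpa [LinearIndependent.pair_iff, Subtype.ext_iff] using hli
  have htop : ⊤ ≤ Submodule.span K (Set.range ![(⟨v, hv⟩ : V), ⟨w, hw⟩]) := fun x _ ↦ by
    simpa [-Matrix.range_cons, Matrix.range_cons_cons_empty, Submodule.mem_span_pair,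
      Subtype.ext_iff] using hspan x x.2
  exact ⟨Basis.mk hli' htop, by simp, by simp⟩

theorem finrank_eq_of_card_eq_pow {K V : Type*} [DivisionRing K] [Fintype K] [AddCommGroup V]
    [Fintype V] [Module K V] {n : ℕ} (h : Fintype.card V = Fintype.card K ^ n) :
    finrank K V = n :=
  Nat.pow_right_injective Fintype.one_lt_card (card_eq_pow_finrank.symm.trans h)

section FiniteField

variable {K L : Type*} [Field K] [Fintype K] [Field L] [Algebra K L]

theorem mem_range_algebraMap_iff_pow_card_eq_self [Finite L] (x : L) :
    x ∈ Set.range (algebraMap K L) ↔ x ^ Fintype.card K = x := by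
  rw [IsGalois.mem_range_algebraMap_iff_fixed]
  refine ⟨fun h ↦ h (FiniteField.frobeniusAlgEquivOfAlgebraic K L), fun h σ ↦ ?_⟩
  obtain ⟨n, rfl⟩ := (FiniteField.bijective_frobeniusAlgEquivOfAlgebraic_pow K L).2 σ
  rw [AlgEquiv.coe_pow]
  exact Function.iterate_fixed h n

theorem sum_filter_pow_card_eq_self [Fintype L] [DecidableEq L] {M : Type*} [AddCommMonoid M]
    (g : L → M) :
    ∑ x with x ^ Fintype.card K = x, g x = ∑ a : K, g (algebraMap K L a) := by
  have hfilter : (univ.filter fun x : L ↦ x ^ Fintype.card K = x) =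
      univ.map ⟨algebraMap K L, (algebraMap K L).injective⟩ := by
    ext x
    simp [← mem_range_algebraMap_iff_pow_card_eq_self]
  rw [hfilter, sum_map, Function.Embedding.coeFn_mk]

theorem trace_eq_zero_iff_sum_pow_card_eq_zero [Finite L] (x : L) :
    Algebra.trace K L x = 0 ↔ ∑ i ∈ range (finrank K L), x ^ Fintype.card K ^ i = 0 := by
  rw [← map_eq_zero (algebraMap K L), FiniteField.algebraMap_trace_eq_sum_pow,
    Nat.card_eq_fintype_card]

theorem exists_basis_fin_two_of_pow_card_eq_self [Finite L] {V : Submodule K L} {v w : L}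
    (hv : v ∈ V) (hw : w ∈ V)
    (hspan : ∀ x ∈ V, ∃ a b : L,
      a ^ Fintype.card K = a ∧ b ^ Fintype.card K = b ∧ x = a * v + b * w)
    (hindep : ∀ a b : L, a ^ Fintype.card K = a → b ^ Fintype.card K = b →
      a * v + b * w = 0 → a = 0 ∧ b = 0) :
    ∃ b : Basis (Fin 2) K V, (b 0 : L) = v ∧ (b 1 : L) = w := by
  simp only [← mem_range_algebraMap_iff_pow_card_eq_self (K := K)] at hspan hindep
  refine exists_basis_fin_two hv hw (LinearIndependent.pair_iff.2 fun a b hab ↦ ?_) fun x hx ↦ ?_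
  · simpa using hindep _ _ ⟨a, rfl⟩ ⟨b, rfl⟩ (by simpa only [Algebra.smul_def] using hab)
  · obtain ⟨_, _, ⟨a, rfl⟩, ⟨b, rfl⟩, rfl⟩ := hspan x hx
    exact ⟨a, b, by simp only [Algebra.smul_def]⟩

theorem sum_addChar_ker_trace [Fintype L] [DecidableEq L] {R ι : Type*} [CommSemiring R]
    [Fintype ι] (hpow : Function.Injective fun a : K ↦ a ^ (finrank K L + 1))
    (b : Basis ι K (LinearMap.ker (Algebra.trace K L))) (ψ : AddChar L R) :
    ∑ x : L with ∑ i ∈ range (finrank K L), x ^ Fintype.card K ^ i = 0,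
        ψ (x ^ (∑ i ∈ range (finrank K L), Fintype.card K ^ i + Fintype.card K)) =
      ∏ i, ∑ a : L with a ^ Fintype.card K = a, ψ ((b i : L) ^ Fintype.card K * a) := by
  classical
  have hexp (x : L) : x ^ (∑ i ∈ range (finrank K L), Fintype.card K ^ i + Fintype.card K) =
      Algebra.norm K x • FiniteField.frobeniusAlgEquivOfAlgebraic K L x := by
    rw [pow_add, Algebra.smul_def, FiniteField.algebraMap_norm_eq_pow_sum,
      Nat.card_eq_fintype_card, FiniteField.coe_frobeniusAlgEquivOfAlgebraic]
  have hstable (x : L) (hx : x ∈ LinearMap.ker (Algebra.trace K L)) :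
      FiniteField.frobeniusAlgEquivOfAlgebraic K L x ∈ LinearMap.ker (Algebra.trace K L) := by
    rwa [LinearMap.mem_ker, Algebra.trace_eq_of_algEquiv, ← LinearMap.mem_ker]
  have hker (x : L) : (x ∈ univ.filter fun x : L ↦
      ∑ i ∈ range (finrank K L), x ^ Fintype.card K ^ i = 0) ↔
      x ∈ LinearMap.ker (Algebra.trace K L) := by
    simp [← trace_eq_zero_iff_sum_pow_card_eq_zero]
  simp only [sum_subtype _ hker, hexp, sum_filter_pow_card_eq_self (K := K)]
  rw [sum_addChar_norm_smul_eq_prod_basis hpow _ hstable b]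
  simp only [Algebra.smul_def, mul_comm, FiniteField.coe_frobeniusAlgEquivOfAlgebraic]

theorem mem_ker_trace_iff_of_finrank_eq_three [Finite L] (hdeg : finrank K L = 3) (x : L) :
    x ∈ LinearMap.ker (Algebra.trace K L) ↔
      x + x ^ Fintype.card K + x ^ Fintype.card K ^ 2 = 0 := by
  simp [trace_eq_zero_iff_sum_pow_card_eq_zero, hdeg, sum_range_succ]

theorem sum_addChar_ker_trace_of_finrank_eq_three [CharP K 2] [Fintype L] [DecidableEq L]
    {R : Type*} [CommSemiring R] (hdeg : finrank K L = 3)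
    (b : Basis (Fin 2) K (LinearMap.ker (Algebra.trace K L))) (ψ : AddChar L R) :
    ∑ x : L with x + x ^ Fintype.card K + x ^ Fintype.card K ^ 2 = 0,
        ψ (x ^ (1 + 2 * Fintype.card K + Fintype.card K ^ 2)) =
      (∑ a : L with a ^ Fintype.card K = a, ψ ((b 0 : L) ^ Fintype.card K * a)) *
        ∑ a : L with a ^ Fintype.card K = a, ψ ((b 1 : L) ^ Fintype.card K * a) := by
  have hpow : Function.Injective fun a : K ↦ a ^ (finrank K L + 1) := by
    rw [hdeg]
    exact iterateFrobenius_inj K 2 2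
  have hexp : 1 + 2 * Fintype.card K + Fintype.card K ^ 2 =
      ∑ i ∈ range (finrank K L), Fintype.card K ^ i + Fintype.card K := by
    simp only [hdeg, sum_range_succ, sum_range_zero]
    ring
  rw [hexp]
  simpa [hdeg, sum_range_succ] using sum_addChar_ker_trace hpow b ψ

end FiniteField

theorem nonempty_algebra_galoisField {p m n : ℕ} [Fact p.Prime] {F : Type*} [Field F] [Fintype F]
    (hF : Fintype.card F = p ^ n) (hm : m ≠ 0) (hmn : m ∣ n) :
    Nonempty (Algebra (GaloisField p m) F) := by
  have : CharP F p := charP_of_card_eq_prime_pow hF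
  let : Algebra (ZMod p) F := ZMod.algebra F p
  have hfinrank : finrank (ZMod p) F = n :=
    finrank_eq_of_card_eq_pow (hF.trans (by rw [ZMod.card]))
  obtain ⟨φ⟩ := FiniteField.nonempty_algHom_of_finrank_dvd
    (F := ZMod p) (K := GaloisField p m) (L := F) (by rwa [GaloisField.finrank p hm, hfinrank])
  exact ⟨φ.toRingHom.toAlgebra⟩

theorem chi_algebraMap_add {F : Type*} [Field F] [Algebra (ZMod 2) F] [DecidableEq F]
    (a b : ZMod 2) :
    chi (algebraMap (ZMod 2) F (a + b)) =
      chi (algebraMap (ZMod 2) F a) * chi (algebraMap (ZMod 2) F b) := by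
  simp only [chi, map_eq_zero]
  decide +revert

section AbsoluteTrace

variable {F : Type*} [Field F] [Fintype F]

theorem absTr_eq_algebraMap_trace [Algebra (ZMod 2) F] {m : ℕ} (hF : Fintype.card F = 2 ^ m)
    (x : F) : absTr m x = algebraMap (ZMod 2) F (Algebra.trace (ZMod 2) F x) := by
  have hfinrank : finrank (ZMod 2) F = m :=
    finrank_eq_of_card_eq_pow (hF.trans (by rw [ZMod.card]))
  rw [FiniteField.algebraMap_trace_eq_sum_pow, hfinrank, Nat.card_zmod, absTr]

/-- The additive character `x ↦ (-1) ^ Tr x` of a field `F` with `2 ^ m` elements, where `Tr` is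
the absolute trace, bundled so that sums of its values factor along a basis. -/
def absTrAddChar [DecidableEq F] {m : ℕ} (hF : Fintype.card F = 2 ^ m) : AddChar F ℤ where
  toFun x := chi (absTr m x)
  map_zero_eq_one' := by simp [chi, absTr]
  map_add_eq_mul' x y := by
    have : CharP F 2 := charP_of_card_eq_prime_pow hF
    let : Algebra (ZMod 2) F := ZMod.algebra F 2
    simp only [absTr_eq_algebraMap_trace hF, map_add (Algebra.trace _ _), chi_algebraMap_add]

end AbsoluteTrace

/-- Let `q = 2^e` be a power of 2, `k ≥ 1`, `T₀ = ker Tr_{q^{3k}/q^k}`, and `d₁, d₂` a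
basis of `T₀` over `F_{q^k}`. Then for every `c ∈ F_{q^{3k}}`,
`Σ_{x ∈ T₀} (−1)^{Tr(c·x^{1+2q^k+q^{2k}})}
  = (Σ_{x ∈ F_{q^k}} (−1)^{Tr(c·d₁^{q^k}·x)}) · (Σ_{y ∈ F_{q^k}} (−1)^{Tr(c·d₂^{q^k}·y)})`,
where `Tr = Tr_{q^{3k}/2}`. -/
theorem stmt_11 (q e k : ℕ) (he : 0 < e) (hq : q = 2 ^ e) (hk : 0 < k)
    (F : Type*) [Field F] [Fintype F] [DecidableEq F]
    (hF : Fintype.card F = q ^ (3 * k))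
    (d₁ d₂ : F)
    (hd₁ : d₁ + d₁ ^ q ^ k + d₁ ^ q ^ (2 * k) = 0)
    (hd₂ : d₂ + d₂ ^ q ^ k + d₂ ^ q ^ (2 * k) = 0)
    (hspan : ∀ t : F, t + t ^ q ^ k + t ^ q ^ (2 * k) = 0 →
      ∃ a b : F, a ^ q ^ k = a ∧ b ^ q ^ k = b ∧ t = a * d₁ + b * d₂)
    (hindep : ∀ a b : F, a ^ q ^ k = a → b ^ q ^ k = b →
      a * d₁ + b * d₂ = 0 → a = 0 ∧ b = 0)
    (c : F) :
    ∑ x ∈ Finset.univ.filter (fun x : F => x + x ^ q ^ k + x ^ q ^ (2 * k) = 0),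
        chi (absTr (3 * k * e) (c * x ^ (1 + 2 * q ^ k + q ^ (2 * k))))
      = (∑ x ∈ Finset.univ.filter (fun x : F => x ^ q ^ k = x),
            chi (absTr (3 * k * e) (c * d₁ ^ q ^ k * x))) *
        (∑ y ∈ Finset.univ.filter (fun y : F => y ^ q ^ k = y),
            chi (absTr (3 * k * e) (c * d₂ ^ q ^ k * y))) := by
  have hcard : Fintype.card F = 2 ^ (3 * k * e) := by rw [hF, hq, ← pow_mul]; congr 1; ring
  have hek : e * k ≠ 0 := (mul_pos he hk).ne'
  obtain ⟨_⟩ := nonempty_algebra_galoisField hcard hek ⟨3, by ring⟩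
  let K := GaloisField 2 (e * k)
  let : Fintype K := Fintype.ofFinite K
  have hK : q ^ k = Fintype.card K := by
    rw [Fintype.card_eq_nat_card, GaloisField.card 2 _ hek, hq, pow_mul]
  have hK2 : q ^ (2 * k) = Fintype.card K ^ 2 := by rw [← hK, ← pow_mul, mul_comm]
  have hdeg : finrank K F = 3 := finrank_eq_of_card_eq_pow (by rw [hF, ← hK, ← pow_mul, mul_comm])
  simp only [hK, hK2, ← mem_ker_trace_iff_of_finrank_eq_three hdeg] at hd₁ hd₂ hspan
  simp only [hK] at hindep
  obtain ⟨b, rfl, rfl⟩ := exists_basis_fin_two_of_pow_card_eq_self hd₁ hd₂ hspan hindep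
  simpa [hK, hK2, absTrAddChar, mul_assoc] using
    sum_addChar_ker_trace_of_finrank_eq_three hdeg b ((absTrAddChar hcard).mulShift c)
end

section
/- Let q be a power of 2 and k ≥ 1 an integer. Let c ∈ F_{q^{3k}} with c ∉ F_{q^k}, and let g : F_{q^{3k}} → F_{q^{3k}} be any function such that Tr(c·(g(x)+g(x)^{q^{2k}})) = Tr(c·S_{2k}(x)^{1+2q^k+q^{2k}}) for all x (as established for g(x) = L(x) + S_{2k}(x)^{q^k+3} with L additive and L + L^{q^{2k}} = S_{2k}^4). Then Σ_{x ∈ F_{q^{3k}}} (−1)^{Tr(c·S_{2k}(x)^{1+2q^k+q^{2k}})} = q^k · Σ_{u ∈ T_0} (−1)^{Tr(c·u^{1+2q^k+q^{2k}})}, where T_0 = {u ∈ F_{q^{3k}} : u + u^{q^k} + u^{q^{2k}} = 0} and Tr = Tr_{q^{3k}/2}. -/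
/-!
Write `φ` for the Frobenius `x ↦ x ^ q`, an additive endomorphism with `φ ^ (3 * k) = 1`, and
`b = φ ^ k`. Then `S2k` is the geometric sum `S = ∑ i < 2 * k, φ ^ i`, which factors as
`(1 + b) * ∑ i < k, φ ^ i` and satisfies `S * (φ - 1) = b ^ 2 - 1`. In characteristic two the first
identity gives `ker (b - 1) ⊆ ker S` and `im S ⊆ ker (1 + b + b ^ 2)`, the second one the reverse
inclusions. So `S2k` maps onto `T₀` with all fibres of the size `q ^ k` of the fixed field of `b`.
-/

open Finset

theorem sum_comp_addMonoidHom {G H M : Type*} [AddGroup G] [Fintype G] [AddGroup H]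
    [DecidableEq H] [AddCommMonoid M] (φ : G →+ H) (f : H → M) :
    ∑ x, f (φ x) = #{x | φ x = 0} • ∑ u ∈ univ.image φ, f u := by
  have card_fiber : ∀ u ∈ univ.image φ, #{x | φ x = u} = #{x | φ x = 0} := fun u hu ↦
    AddMonoidHom.card_fiber_eq_of_mem_range φ (by simpa using hu) ⟨0, map_zero φ⟩
  rw [sum_comp, smul_sum]
  exact sum_congr rfl fun u hu ↦ by rw [card_fiber u hu]

section FixedPoints

open Polynomial

theorem roots_X_pow_sub_X_eq_filter_pow_eq_self {F : Type*} [Field F] [Fintype F] [DecidableEq F]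
    {m : ℕ} (hm : 1 < m) (hdvd : (X ^ m - X : F[X]) ∣ X ^ Fintype.card F - X) :
    (X ^ m - X : F[X]).roots = ({x | x ^ m = x} : Finset F).val := by
  have hne : (X ^ Fintype.card F - X : F[X]) ≠ 0 :=
    FiniteField.X_pow_card_sub_X_ne_zero F Fintype.one_lt_card
  have hnodup : (X ^ m - X : F[X]).roots.Nodup := by
    refine Multiset.nodup_of_le (roots.le_of_dvd hne hdvd) ?_
    rw [FiniteField.roots_X_pow_card_sub_X]
    exact univ.nodup
  refine (Multiset.Nodup.ext hnodup (Finset.nodup _)).2 fun x ↦ ?_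
  simp [FiniteField.X_pow_card_sub_X_ne_zero F hm, sub_eq_zero]

theorem card_filter_pow_pow_eq_self {F : Type*} [Field F] [Fintype F] [DecidableEq F]
    {q d n : ℕ} (hF : Fintype.card F = q ^ n) (hd : d ∣ n) :
    #{x : F | x ^ q ^ d = x} = q ^ d := by
  have hcard : 1 < q ^ n := hF ▸ Fintype.one_lt_card
  have hn : n ≠ 0 := by rintro rfl; simp at hcard
  have hqd : 1 < q ^ d :=
    Nat.one_lt_pow (ne_zero_of_dvd_ne_zero hn hd) ((Nat.one_lt_pow_iff hn).1 hcard)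
  have hdvd : (X ^ q ^ d - X : F[X]) ∣ X ^ Fintype.card F - X :=
    hF ▸ dvd_pow_pow_sub_self_of_dvd hd
  have hsplits : (X ^ q ^ d - X : F[X]).Splits := by
    refine Splits.of_dvd ?_ (FiniteField.X_pow_card_sub_X_ne_zero F Fintype.one_lt_card) hdvd
    rw [Fintype.card_eq_nat_card]
    exact splits_X_pow_nat_card_sub_X
  rw [Finset.card_def, ← roots_X_pow_sub_X_eq_filter_pow_eq_self hqd hdvd,
    ← hsplits.natDegree_eq_card_roots, FiniteField.X_pow_card_sub_X_natDegree_eq F hqd]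

end FixedPoints

theorem geom_sum_two_mul {R : Type*} [Semiring R] (a : R) (k : ℕ) :
    ∑ i ∈ range (2 * k), a ^ i = (1 + a ^ k) * ∑ i ∈ range k, a ^ i := by
  simp only [two_mul, sum_range_add, pow_add, add_mul, one_mul, ← mul_sum]

section GeomSum

variable {M : Type*} [AddCommGroup M] [Module (ZMod 2) M] {φ : AddMonoid.End M} {k : ℕ}

theorem geom_sum_two_mul_apply_eq_zero_iff (hφ : φ ^ (3 * k) = 1) {x : M} :
    (∑ i ∈ range (2 * k), φ ^ i) x = 0 ↔ (φ ^ k) x = x := by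
  constructor <;> intro hx
  · have hx' : (φ ^ (2 * k)) x = x := by
      rw [← sub_eq_zero]
      calc (φ ^ (2 * k)) x - x = (φ ^ (2 * k) - 1) x := rfl
        _ = (φ - 1) ((∑ i ∈ range (2 * k), φ ^ i) x) := by rw [← mul_geom_sum]; rfl
        _ = 0 := by rw [hx, map_zero]
    calc (φ ^ k) x = (φ ^ k) ((φ ^ (2 * k)) x) := by rw [hx']
      _ = (φ ^ (3 * k)) x := by rw [show 3 * k = k + 2 * k by ring, pow_add]; rfl
      _ = x := by rw [hφ]; rfl
  · have hcomm : Commute (1 + φ ^ k) (∑ i ∈ range k, φ ^ i) :=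
      Commute.sum_right _ _ _ fun i _ ↦
        (Commute.one_left _).add_left ((Commute.refl φ).pow_pow k i)
    rw [geom_sum_two_mul, hcomm.eq]
    calc (∑ i ∈ range k, φ ^ i) (x + (φ ^ k) x) = (∑ i ∈ range k, φ ^ i) 0 := by
          rw [hx, ZModModule.add_self]
      _ = 0 := map_zero _

theorem exists_geom_sum_two_mul_apply_eq_iff (hφ : φ ^ (3 * k) = 1) {u : M} :
    (∃ x, (∑ i ∈ range (2 * k), φ ^ i) x = u) ↔ u + (φ ^ k) u + (φ ^ (2 * k)) u = 0 := by
  have pow_apply (m n : ℕ) (y : M) : (φ ^ m) ((φ ^ n) y) = (φ ^ (m + n)) y := by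
    rw [pow_add]; rfl
  constructor
  · rintro ⟨x, rfl⟩
    rw [geom_sum_two_mul]
    set y := (∑ i ∈ range k, φ ^ i) x
    have hφy : (φ ^ (3 * k)) y = y := by rw [hφ]; rfl
    change (y + (φ ^ k) y) + (φ ^ k) (y + (φ ^ k) y) + (φ ^ (2 * k)) (y + (φ ^ k) y) = 0
    rw [map_add, map_add, pow_apply, pow_apply, ← two_mul, show 2 * k + k = 3 * k by ring, hφy]
    calc _ = (y + y) + ((φ ^ k) y + (φ ^ k) y) + ((φ ^ (2 * k)) y + (φ ^ (2 * k)) y) := by abel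
      _ = 0 := by simp only [ZModModule.add_self]
  · intro hu
    refine ⟨(φ - 1) ((φ ^ (2 * k)) u), ?_⟩
    have hφu : (φ ^ (2 * k + 2 * k)) u = (φ ^ k) u := by
      rw [show 2 * k + 2 * k = k + 3 * k by ring, pow_add, hφ, mul_one]
    calc (∑ i ∈ range (2 * k), φ ^ i) ((φ - 1) ((φ ^ (2 * k)) u))
        = (φ ^ (2 * k) - 1) ((φ ^ (2 * k)) u) := by rw [← geom_sum_mul]; rfl
      _ = (φ ^ k) u - (φ ^ (2 * k)) u := by rw [← hφu, ← pow_apply]; rfl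
      _ = -u := by rw [ZModModule.sub_eq_add, eq_neg_iff_add_eq_zero, ← hu]; abel
      _ = u := ZModModule.neg_eq_self u

end GeomSum

/-- The iterated Frobenius `x ↦ x ^ p ^ e` as an element of the ring of additive endomorphisms, in
which `S2k` is a geometric sum. -/
def frobeniusEnd (R : Type*) [CommSemiring R] (p : ℕ) [ExpChar R p] (e : ℕ) : AddMonoid.End R :=
  (iterateFrobenius R p e).toAddMonoidHom

theorem frobeniusEnd_pow_apply {R : Type*} [CommSemiring R] {p : ℕ} [ExpChar R p] (e i : ℕ)
    (x : R) : (frobeniusEnd R p e ^ i) x = x ^ (p ^ e) ^ i :=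
  congr_fun (pow_iterate (p ^ e) i) x

theorem frobeniusEnd_pow_eq_one {R : Type*} [CommSemiring R] {p : ℕ} [ExpChar R p] {e n : ℕ}
    (hR : ∀ x : R, x ^ (p ^ e) ^ n = x) : frobeniusEnd R p e ^ n = 1 := by
  ext x
  rw [frobeniusEnd_pow_apply, hR, AddMonoid.End.coe_one, id]

theorem geom_sum_frobeniusEnd_apply {F : Type*} [Field F] {p : ℕ} [ExpChar F p] (e k : ℕ) (x : F) :
    (∑ i ∈ range (2 * k), frobeniusEnd F p e ^ i) x = S2k (p ^ e) k x :=
  (AddMonoidHom.finsetSum_apply _ _ x).trans <|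
    sum_congr rfl fun i _ ↦ frobeniusEnd_pow_apply e i x

section S2k

variable {F : Type*} [Field F] [CharP F 2] {e k : ℕ}

theorem S2k_eq_zero_iff (hF : ∀ x : F, x ^ (2 ^ e) ^ (3 * k) = x) {x : F} :
    S2k (2 ^ e) k x = 0 ↔ x ^ (2 ^ e) ^ k = x := by
  let : Algebra (ZMod 2) F := ZMod.algebra F 2
  rw [← geom_sum_frobeniusEnd_apply,
    geom_sum_two_mul_apply_eq_zero_iff (frobeniusEnd_pow_eq_one hF), frobeniusEnd_pow_apply]

theorem exists_S2k_eq_iff (hF : ∀ x : F, x ^ (2 ^ e) ^ (3 * k) = x) {u : F} :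
    (∃ x, S2k (2 ^ e) k x = u) ↔ u + u ^ (2 ^ e) ^ k + u ^ (2 ^ e) ^ (2 * k) = 0 := by
  let : Algebra (ZMod 2) F := ZMod.algebra F 2
  simp only [← geom_sum_frobeniusEnd_apply,
    exists_geom_sum_two_mul_apply_eq_iff (frobeniusEnd_pow_eq_one hF), frobeniusEnd_pow_apply]

end S2k

theorem stmt_16_general {q e k : ℕ} (hq : q = 2 ^ e) {F : Type*} [Field F] [Fintype F]
    [DecidableEq F] (hF : Fintype.card F = q ^ (3 * k)) {M : Type*} [AddCommMonoid M] (f : F → M) :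
    ∑ x : F, f (S2k q k x) = q ^ k • ∑ u : F with u + u ^ q ^ k + u ^ q ^ (2 * k) = 0, f u := by
  subst hq
  have : CharP F 2 := charP_of_card_eq_prime_pow (f := e * (3 * k)) (by rw [hF, ← pow_mul])
  have hpow (x : F) : x ^ (2 ^ e) ^ (3 * k) = x := by rw [← hF, FiniteField.pow_card]
  have card_ker : #{x : F | S2k (2 ^ e) k x = 0} = (2 ^ e) ^ k := by
    simp only [S2k_eq_zero_iff hpow, card_filter_pow_pow_eq_self hF (Dvd.intro_left 3 rfl)]
  have image_eq : univ.image (S2k (F := F) (2 ^ e) k) =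
      ({u | u + u ^ (2 ^ e) ^ k + u ^ (2 ^ e) ^ (2 * k) = 0} : Finset F) := by
    ext u
    simp only [mem_image, mem_filter_univ, mem_univ, true_and, exists_S2k_eq_iff hpow]
  obtain ⟨S, hS⟩ : ∃ S : F →+ F, ⇑S = S2k (2 ^ e) k :=
    ⟨∑ i ∈ range (2 * k), frobeniusEnd F 2 e ^ i, funext (geom_sum_frobeniusEnd_apply e k)⟩
  rw [← image_eq, ← card_ker, ← hS]
  exact sum_comp_addMonoidHom S f

/-- Let `q = 2^e` be a power of 2, `k ≥ 1`, `c ∈ F_{q^{3k}} \ F_{q^k}`, and let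
`g : F_{q^{3k}} → F_{q^{3k}}` satisfy
`Tr(c·(g(x) + g(x)^{q^{2k}})) = Tr(c·S_{2k}(x)^{1+2q^k+q^{2k}})` for all `x`. Then
`Σ_{x ∈ F_{q^{3k}}} (−1)^{Tr(c·S_{2k}(x)^{1+2q^k+q^{2k}})}
   = q^k · Σ_{u ∈ T₀} (−1)^{Tr(c·u^{1+2q^k+q^{2k}})}`,
where `T₀ = {u : u + u^{q^k} + u^{q^{2k}} = 0}` and `Tr = Tr_{q^{3k}/2}`. -/
theorem stmt_16 (q e k : ℕ) (he : 0 < e) (hq : q = 2 ^ e) (hk : 0 < k)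
    (F : Type*) [Field F] [Fintype F] [DecidableEq F]
    (hF : Fintype.card F = q ^ (3 * k))
    (c : F) (hc : ¬ c ^ q ^ k = c)
    (g : F → F)
    (hg : ∀ x : F, absTr (3 * k * e) (c * (g x + (g x) ^ q ^ (2 * k)))
      = absTr (3 * k * e) (c * (S2k q k x) ^ (1 + 2 * q ^ k + q ^ (2 * k)))) :
    ∑ x : F, chi (absTr (3 * k * e) (c * (S2k q k x) ^ (1 + 2 * q ^ k + q ^ (2 * k))))
      = (q ^ k : ℤ) *
        ∑ u ∈ Finset.univ.filter (fun u : F => u + u ^ q ^ k + u ^ q ^ (2 * k) = 0),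
          chi (absTr (3 * k * e) (c * u ^ (1 + 2 * q ^ k + q ^ (2 * k)))) := by
  simpa only [nsmul_eq_mul, Nat.cast_pow] using stmt_16_general hq hF
    fun u ↦ chi (absTr (3 * k * e) (c * u ^ (1 + 2 * q ^ k + q ^ (2 * k))))
end
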